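/- For a geodesic ray b in a proper CAT(0) space, the following are equivalent: (1) b is κ-contracting; (2) the κ-lower divergence of b is superlinear; (3) the κ-lower divergence of b is at least quadratic; (4) b is κ-slim. -/

import Mathlib

open Set Metric Filter ENNReal

noncomputable section

/-- The set of points lying on a geodesic from `x` to `y`; in a uniquely geodesic space
(such as a CAT(0) space) this is the geodesic segment `[x,y]`. -/
def seg {X : Type*} [MetricSpace X] (x y : X) : Set X :=
  {z | dist x z + dist z y = dist x y}

/-- `X` is a geodesic metric space. -/
def GeodesicSpace (X : Type*) [MetricSpace X] : Prop :=
  ∀ x y : X, ∃ γ : ℝ → X, γ 0 = x ∧ γ (dist x y) = y ∧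
    ∀ s ∈ Icc (0:ℝ) (dist x y), ∀ t ∈ Icc (0:ℝ) (dist x y), dist (γ s) (γ t) = |s - t|

/-- `X` is a CAT(0) space: a geodesic metric space satisfying the CN (Bruhat–Tits)
inequality (comparison of triangles with Euclidean ones). -/
def IsCAT0 (X : Type*) [MetricSpace X] : Prop :=
  GeodesicSpace X ∧ ∀ x y z m : X, dist y m = dist y z / 2 → dist m z = dist y z / 2 →
    dist x m ^ 2 ≤ (dist x y ^ 2 + dist x z ^ 2) / 2 - dist y z ^ 2 / 4

/-- `b` restricted to `[0,∞)` is a geodesic ray (an isometric embedding of `[0,∞)`). -/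
def IsGeodesicRay {X : Type*} [MetricSpace X] (b : ℝ → X) : Prop :=
  ∀ s t : ℝ, 0 ≤ s → 0 ≤ t → dist (b s) (b t) = |s - t|

/-- The image of the geodesic ray `b`. -/
def rayIm {X : Type*} [MetricSpace X] (b : ℝ → X) : Set X := b '' Ici 0

/-- `κ` is a sublinear function: monotone increasing, concave, `≥ 1`, with `κ(t)/t → 0`. -/
structure IsSublinearFn (κ : ℝ → ℝ) : Prop where
  one_le : ∀ t : ℝ, 1 ≤ κ t
  mono : Monotone κ
  concave : ConcaveOn ℝ (Ici 0) κ
  sublinear : Tendsto (fun t => κ t / t) atTop (nhds 0)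

/-- `π` is the nearest-point projection onto the geodesic ray `b`:
`π x` lies on `b` and realizes the distance from `x` to `b`. -/
def IsProj {X : Type*} [MetricSpace X] (b : ℝ → X) (π : X → X) : Prop :=
  ∀ x : X, π x ∈ rayIm b ∧ dist x (π x) = infDist x (rayIm b)

/-- The geodesic ray `b` (with projection `π`) is `κ`-contracting: there is `c ≥ 0` such
that whenever `d(x,y) ≤ d(x,b)` we have `d(x_b, y_b) ≤ c·κ(‖x‖)`. -/
def KappaContracting {X : Type*} [MetricSpace X] (κ : ℝ → ℝ) (o : X) (b : ℝ → X)
    (π : X → X) : Prop :=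
  ∃ c ≥ (0:ℝ), ∀ x y : X, dist x y ≤ infDist x (rayIm b) →
    dist (π x) (π y) ≤ c * κ (dist o x)

/-- `b` is `κ`-contracting with contracting constant `c` (projection form, Lemma 2.6):
whenever `d(x,y) < d(x,b)` we have `d(x_b, y_b) ≤ c·κ(‖x_b‖)`. -/
def KappaContractingWith {X : Type*} [MetricSpace X] (κ : ℝ → ℝ) (o : X) (b : ℝ → X)
    (π : X → X) (c : ℝ) : Prop :=
  0 ≤ c ∧ ∀ x y : X, dist x y < infDist x (rayIm b) →
    dist (π x) (π y) ≤ c * κ (dist o (π x))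

/-- κ-slim condition 1: `d(x_b, [x,y]) ≤ c·κ(‖x_b‖)` for all `x ∈ X`, `y ∈ im(b)`. -/
def SlimCond1 {X : Type*} [MetricSpace X] (κ : ℝ → ℝ) (o : X) (b : ℝ → X) (π : X → X) : Prop :=
  ∃ c ≥ (0:ℝ), ∀ x : X, ∀ y ∈ rayIm b, infDist (π x) (seg x y) ≤ c * κ (dist o (π x))

/-- κ-slim condition 2: `d(x_b, [x,y]) ≤ c·κ(‖z‖)` for some `z` on `b` between `x_b` and `y`. -/
def SlimCond2 {X : Type*} [MetricSpace X] (κ : ℝ → ℝ) (o : X) (b : ℝ → X) (π : X → X) : Prop :=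
  ∃ c ≥ (0:ℝ), ∀ x : X, ∀ y ∈ rayIm b, ∃ z ∈ rayIm b ∩ seg (π x) y,
    infDist (π x) (seg x y) ≤ c * κ (dist o z)

/-- κ-slim condition 3: for `x y z` with `[y,z] ⊆ im(b)` and `w ∈ [y,z]`,
`d(w, [y,x] ∪ [x,z]) ≤ c·κ(‖x_b‖)`. -/
def SlimCond3 {X : Type*} [MetricSpace X] (κ : ℝ → ℝ) (o : X) (b : ℝ → X) (π : X → X) : Prop :=
  ∃ c ≥ (0:ℝ), ∀ x y z : X, seg y z ⊆ rayIm b →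
    ∀ w ∈ seg y z, infDist w (seg y x ∪ seg x z) ≤ c * κ (dist o (π x))

/-- κ-slim condition 4: for `x ∈ X` and `[y,z] ⊆ im(b)` with `‖y‖ ≤ ‖x_b‖ ≤ ‖z‖` and
`w ∈ [y,z]`, `d(w, [y,x] ∪ [x,z]) ≤ c·κ(‖z‖)`. -/
def SlimCond4 {X : Type*} [MetricSpace X] (κ : ℝ → ℝ) (o : X) (b : ℝ → X) (π : X → X) : Prop :=
  ∃ c ≥ (0:ℝ), ∀ x y z : X, seg y z ⊆ rayIm b →
    dist o y ≤ dist o (π x) → dist o (π x) ≤ dist o z →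
    ∀ w ∈ seg y z, infDist w (seg y x ∪ seg x z) ≤ c * κ (dist o z)

/-- The set of (continuous, rectifiable-or-not) paths from `b(t - r·κ(t))` to
`b(t + r·κ(t))` avoiding the open ball of radius `r·κ(t)` about `b(t)`. -/
def pathsOutside {X : Type*} [MetricSpace X] (κ : ℝ → ℝ) (b : ℝ → X) (r t : ℝ) :
    Set (ℝ → X) :=
  {γ | ContinuousOn γ (Icc 0 1) ∧ γ 0 = b (t - r * κ t) ∧ γ 1 = b (t + r * κ t) ∧
       ∀ s ∈ Icc (0:ℝ) 1, γ s ∉ ball (b t) (r * κ t)}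

/-- `ρ_κ(r,t)`: the infimum of the lengths of paths from `b(t - r·κ(t))` to
`b(t + r·κ(t))` lying outside the open ball of radius `r·κ(t)` about `b(t)`
(`∞` if there is no such path). -/
noncomputable def rhoKappa {X : Type*} [MetricSpace X] (κ : ℝ → ℝ) (b : ℝ → X)
    (r t : ℝ) : ℝ≥0∞ :=
  ⨅ γ ∈ pathsOutside κ b r t, eVariationOn γ (Icc 0 1)

/-- The κ-lower divergence `div_κ(r) = inf_{t > r·κ(t)} ρ_κ(r,t)/κ(t)`. -/
noncomputable def divKappa {X : Type*} [MetricSpace X] (κ : ℝ → ℝ) (b : ℝ → X)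
    (r : ℝ) : ℝ≥0∞ :=
  ⨅ t ∈ {t : ℝ | r * κ t < t}, rhoKappa κ b r t / ENNReal.ofReal (κ t)

/-!
The implications are (1) ⇒ (3) ⇒ (2) ⇒ (4) ⇒ (1).

* Contracting ⇒ quadratic: pushing points down towards the ray turns contraction into a bound in
  terms of `κ ‖π x‖`. A path around the ball of radius `r κ(t)` must therefore travel a distance of
  order `r κ(t)` each time its projection advances by a multiple of `κ(t)`, and over the middle of
  the ball this happens of order `r` times.
* Superlinear ⇒ slim: if `[x, y]` misses the ball of radius `12 R` about `π x`, then going from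
  `π x` along `[π x, x]`, across to `[x, y]` and back to the ray avoids a ball of radius `R`
  centred on the ray at distance `2 R` from `π x`, at a cost linear in `R`.
* Slim ⇒ contracting: if `π x` and `π y` are far apart, slimness makes `x, π x, π y` and
  `π x, π y, y` almost geodesic, and the quadrilateral inequality of CAT(0) spaces then makes
  `d(x, y)` larger than `d(x, π x)`.
-/

section MidpointConvexity

lemma nonpos_of_midpoint_le {G : ℝ → ℝ} (hbdd : BddAbove (G '' Icc 0 1))
    (hmid : ∀ s ∈ Icc (0 : ℝ) 1, ∀ u ∈ Icc (0 : ℝ) 1, G ((s + u) / 2) ≤ (G s + G u) / 2)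
    (h0 : G 0 ≤ 0) (h1 : G 1 ≤ 0) {s : ℝ} (hs : s ∈ Icc (0 : ℝ) 1) : G s ≤ 0 := by
  set M := sSup (G '' Icc 0 1)
  have le_M : ∀ u ∈ Icc (0 : ℝ) 1, G u ≤ M := fun u hu => le_csSup hbdd (mem_image_of_mem G hu)
  -- Every point of `[0, 1]` is the midpoint of an endpoint and another point of `[0, 1]`.
  have le_half : ∀ u ∈ Icc (0 : ℝ) 1, G u ≤ M / 2 := by
    rintro u ⟨hu0, hu1⟩
    rcases le_total u (1 / 2) with hu | hu
    · have hu' : 2 * u ∈ Icc (0 : ℝ) 1 := ⟨by linarith, by linarith⟩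
      have := hmid 0 ⟨le_rfl, zero_le_one⟩ _ hu'
      rw [show (0 + 2 * u) / 2 = u by ring] at this
      linarith [le_M _ hu']
    · have hu' : 2 * u - 1 ∈ Icc (0 : ℝ) 1 := ⟨by linarith, by linarith⟩
      have := hmid 1 ⟨zero_le_one, le_rfl⟩ _ hu'
      rw [show (1 + (2 * u - 1)) / 2 = u by ring] at this
      linarith [le_M _ hu']
  have : M ≤ M / 2 := csSup_le ⟨G s, mem_image_of_mem G hs⟩ (forall_mem_image.2 le_half)
  linarith [le_M s hs]

end MidpointConvexity

section Segments

variable {X : Type*} [MetricSpace X] {m p q x y z : X} {s : ℝ}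

lemma left_mem_seg (x y : X) : x ∈ seg x y := by simp [seg]

lemma right_mem_seg (x y : X) : y ∈ seg x y := by simp [seg]

lemma seg_comm (x y : X) : seg x y = seg y x := by
  ext z
  simp only [seg, mem_ofPred_eq, dist_comm, add_comm]

lemma dist_add_dist_of_mem_seg (hz : z ∈ seg x y) : dist x z + dist z y = dist x y := hz

lemma seg_subset_of_mem (hm : m ∈ seg x y) : seg m y ⊆ seg x y := by
  intro n hn
  have hm' := dist_add_dist_of_mem_seg hm
  have hn' := dist_add_dist_of_mem_seg hn
  exact le_antisymm (by linarith [dist_triangle x m n]) (dist_triangle x n y)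

lemma dist_add_dist_le_of_mem_seg (p : X) (hz : z ∈ seg x y) :
    dist x p + dist p y ≤ dist x y + 2 * dist p z := by
  linarith [dist_add_dist_of_mem_seg hz, dist_triangle_right x p z, dist_triangle p z y]

lemma dist_add_dist_le_of_infDist_seg (p x q : X) :
    dist x p + dist p q ≤ dist x q + 2 * infDist p (seg x q) := by
  have : (dist x p + dist p q - dist x q) / 2 ≤ infDist p (seg x q) := by
    refine (le_infDist ⟨x, left_mem_seg x q⟩).2 fun z hz => ?_
    linarith [dist_add_dist_le_of_mem_seg p hz]
  linarith

/-- `m` divides a geodesic from `y` to `z` in the ratio `s : 1 - s`. Such a point is prescribed by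
its distances to `y` and `z`, so that no geodesic has to be chosen. -/
def AtFraction (s : ℝ) (y z m : X) : Prop :=
  dist y m = s * dist y z ∧ dist m z = (1 - s) * dist y z

namespace AtFraction

lemma symm (h : AtFraction s y z m) : AtFraction (1 - s) z y m := by
  refine ⟨?_, ?_⟩
  · rw [dist_comm z m, dist_comm z y, h.2]
  · rw [dist_comm m y, dist_comm z y, h.1]; ring

lemma mem_seg (h : AtFraction s y z m) : m ∈ seg y z := by
  simp only [seg, mem_ofPred_eq, h.1, h.2]; ring

end AtFraction

lemma exists_atFraction_of_mem_seg (hm : m ∈ seg y z) :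
    ∃ s ∈ Icc (0 : ℝ) 1, AtFraction s y z m := by
  have hadd := dist_add_dist_of_mem_seg hm
  have hle : dist y m ≤ dist y z := by linarith [dist_nonneg (x := m) (y := z)]
  have hmul : dist y m / dist y z * dist y z = dist y m :=
    div_mul_cancel_of_imp fun h => le_antisymm (h ▸ hle) dist_nonneg
  refine ⟨dist y m / dist y z, ⟨by positivity, div_le_one_of_le₀ hle dist_nonneg⟩, hmul.symm, ?_⟩
  rw [sub_mul, hmul]; linarith

/-- The restriction of `γ` to `[0, 1]` is a geodesic from `y` to `z` of constant speed. -/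
structure IsConstSpeedGeodesic (γ : ℝ → X) (y z : X) : Prop where
  zero : γ 0 = y
  one : γ 1 = z
  dist_eq : ∀ s ∈ Icc (0 : ℝ) 1, ∀ t ∈ Icc (0 : ℝ) 1, dist (γ s) (γ t) = |s - t| * dist y z

namespace IsConstSpeedGeodesic

variable {γ : ℝ → X}

lemma lipschitzOnWith (hγ : IsConstSpeedGeodesic γ y z) :
    LipschitzOnWith (nndist y z) γ (Icc 0 1) :=
  LipschitzOnWith.of_dist_le_mul fun s hs t ht => by
    rw [hγ.dist_eq s hs t ht, Real.dist_eq, coe_nndist, mul_comm]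

lemma atFraction (hγ : IsConstSpeedGeodesic γ y z) (hs : s ∈ Icc (0 : ℝ) 1) :
    AtFraction s y z (γ s) := by
  have hleft := hγ.dist_eq 0 ⟨le_rfl, zero_le_one⟩ s hs
  have hright := hγ.dist_eq s hs 1 ⟨zero_le_one, le_rfl⟩
  rw [hγ.zero, zero_sub, abs_neg, abs_of_nonneg hs.1] at hleft
  rw [hγ.one, abs_sub_comm, abs_of_nonneg (sub_nonneg.2 hs.2)] at hright
  exact ⟨hleft, hright⟩

end IsConstSpeedGeodesic

namespace GeodesicSpace

lemma exists_isConstSpeedGeodesic (hX : GeodesicSpace X) (y z : X) :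
    ∃ γ : ℝ → X, IsConstSpeedGeodesic γ y z := by
  obtain ⟨γ, hγ0, hγ1, hγ⟩ := hX y z
  have hmem : ∀ s ∈ Icc (0 : ℝ) 1, s * dist y z ∈ Icc (0 : ℝ) (dist y z) := fun s hs =>
    ⟨mul_nonneg hs.1 dist_nonneg, mul_le_of_le_one_left dist_nonneg hs.2⟩
  refine ⟨fun s => γ (s * dist y z), by simpa using hγ0, by simpa using hγ1, fun s hs t ht => ?_⟩
  rw [hγ _ (hmem s hs) _ (hmem t ht), ← sub_mul, abs_mul, abs_of_nonneg dist_nonneg]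

lemma exists_atFraction (hX : GeodesicSpace X) (y z : X) (hs : s ∈ Icc (0 : ℝ) 1) :
    ∃ m, AtFraction s y z m :=
  (hX.exists_isConstSpeedGeodesic y z).imp' (· s) fun _ hγ => hγ.atFraction hs

lemma exists_mem_seg_dist_eq (hX : GeodesicSpace X) {h : ℝ} (h0 : 0 ≤ h) (hle : h ≤ dist y z) :
    ∃ m ∈ seg y z, dist y m = h := by
  obtain ⟨m, hm⟩ := hX.exists_atFraction y z (s := h / dist y z)
    ⟨by positivity, div_le_one_of_le₀ hle dist_nonneg⟩
  exact ⟨m, hm.mem_seg, hm.1.trans (div_mul_cancel_of_imp fun hd => le_antisymm (hd ▸ hle) h0)⟩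

end GeodesicSpace

end Segments

section ComparisonGeometry

variable {X : Type*} [MetricSpace X] {m m' p q x y z : X} {s : ℝ}

namespace IsCAT0

lemma atFraction_unique (hX : IsCAT0 X) (h : AtFraction s y z m) (h' : AtFraction s y z m') :
    m = m' := by
  obtain ⟨n, hn⟩ := hX.1.exists_atFraction m m' (s := 1 / 2) ⟨by norm_num, by norm_num⟩
  have hmn : dist m n = dist m m' / 2 := by linarith [hn.1]
  have hnm' : dist n m' = dist m m' / 2 := by linarith [hn.2]
  have cn_y := hX.2 y m m' n hmn hnm'
  have cn_z := hX.2 z m m' n hmn hnm'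
  rw [h.1, h'.1] at cn_y
  rw [dist_comm z m, dist_comm z m', h.2, h'.2] at cn_z
  by_contra hne
  have hpos : 0 < dist m m' := dist_pos.2 hne
  have lt_y : dist y n < s * dist y z :=
    lt_of_pow_lt_pow_left₀ 2 (h.1 ▸ dist_nonneg) (by nlinarith)
  have lt_z : dist z n < (1 - s) * dist y z :=
    lt_of_pow_lt_pow_left₀ 2 (h.2 ▸ dist_nonneg) (by nlinarith)
  linarith [dist_triangle_right y z n]

lemma stewart (hX : IsCAT0 X) (x : X) (hs : s ∈ Icc (0 : ℝ) 1) (hm : AtFraction s y z m) :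
    dist x m ^ 2 ≤ (1 - s) * dist x y ^ 2 + s * dist x z ^ 2 - s * (1 - s) * dist y z ^ 2 := by
  obtain ⟨γ, hγ⟩ := hX.1.exists_isConstSpeedGeodesic y z
  rw [hX.atFraction_unique hm (hγ.atFraction hs), ← sub_nonpos]
  refine nonpos_of_midpoint_le (G := fun u => dist x (γ u) ^ 2 -
    ((1 - u) * dist x y ^ 2 + u * dist x z ^ 2 - u * (1 - u) * dist y z ^ 2)) ?_ ?_ ?_ ?_ hs
  · have := hγ.lipschitzOnWith.continuousOn
    exact isCompact_Icc.bddAbove_image (by fun_prop)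
  · intro u hu v hv
    have hw : (u + v) / 2 ∈ Icc (0 : ℝ) 1 := ⟨by linarith [hu.1, hv.1], by linarith [hu.2, hv.2]⟩
    have hleft : dist (γ u) (γ ((u + v) / 2)) = dist (γ u) (γ v) / 2 := by
      rw [hγ.dist_eq u hu _ hw, hγ.dist_eq u hu v hv,
        show u - (u + v) / 2 = (u - v) / 2 by ring, abs_div, abs_two]
      ring
    have hright : dist (γ ((u + v) / 2)) (γ v) = dist (γ u) (γ v) / 2 := by
      rw [hγ.dist_eq _ hw v hv, hγ.dist_eq u hu v hv,
        show (u + v) / 2 - v = (u - v) / 2 by ring, abs_div, abs_two]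
      ring
    have cn := hX.2 x _ _ _ hleft hright
    rw [hγ.dist_eq u hu v hv, mul_pow, sq_abs] at cn
    linarith
  · simp [hγ.zero]
  · simp [hγ.one]

lemma stewart_of_mem_seg (hX : IsCAT0 X) (x : X) (hm : m ∈ seg y z) :
    dist y z * dist x m ^ 2 ≤ dist m z * dist x y ^ 2 + dist y m * dist x z ^ 2 -
      dist y m * dist m z * dist y z := by
  obtain ⟨s, hs, hm⟩ := exists_atFraction_of_mem_seg hm
  rw [hm.1, hm.2]
  linarith [mul_le_mul_of_nonneg_left (hX.stewart x hs hm) (dist_nonneg (x := y) (y := z))]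

-- Divide the diagonal `[p, r]` at `m` so that `d(p, m) : d(m, r) = d(p, t) : d(q, r)`, and bound
-- the other diagonal by `d(q, m) + d(m, t)`.
lemma cauchy_schwarz (hX : IsCAT0 X) (p q r t : X) :
    dist p r ^ 2 + dist q t ^ 2 ≤
      dist p q ^ 2 + dist r t ^ 2 + 2 * (dist q r * dist p t) := by
  rcases eq_or_ne q r with rfl | hqr
  · simp
  rcases eq_or_ne p t with rfl | hpt
  · simp [dist_comm, add_comm]
  have ha : 0 < dist q r := dist_pos.2 hqr
  have hc : 0 < dist p t := dist_pos.2 hpt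
  obtain ⟨s, hs0, hs1, hratio⟩ :
      ∃ s : ℝ, 0 < s ∧ s < 1 ∧ s * dist q r = (1 - s) * dist p t := by
    refine ⟨dist p t / (dist q r + dist p t), by positivity, ?_, by field_simp; ring⟩
    rw [div_lt_one (by positivity)]
    linarith
  obtain ⟨m, hm⟩ := hX.1.exists_atFraction p r ⟨hs0.le, hs1.le⟩
  have hq := hX.stewart q ⟨hs0.le, hs1.le⟩ hm
  have ht := hX.stewart t ⟨hs0.le, hs1.le⟩ hm
  rw [dist_comm q p] at hq
  rw [dist_comm t p, dist_comm t r] at ht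
  have hcut : s * (1 - s) * dist q t ^ 2 ≤ s * dist q m ^ 2 + (1 - s) * dist t m ^ 2 := calc
    s * (1 - s) * dist q t ^ 2 ≤ s * (1 - s) * (dist q m + dist t m) ^ 2 := by
      have := sub_pos.2 hs1
      gcongr
      exact dist_triangle_right q t m
    _ ≤ s * dist q m ^ 2 + (1 - s) * dist t m ^ 2 := by
      linarith [sq_nonneg (s * dist q m - (1 - s) * dist t m)]
  have hcross : s ^ 2 * dist q r ^ 2 + (1 - s) ^ 2 * dist p t ^ 2 =
      s * (1 - s) * (2 * (dist q r * dist p t)) := by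
    linear_combination (s * dist q r - (1 - s) * dist p t) * hratio
  refine le_of_mul_le_mul_left ?_ (mul_pos hs0 (sub_pos.2 hs1))
  linarith [mul_le_mul_of_nonneg_left hq hs0.le,
    mul_le_mul_of_nonneg_left ht (sub_nonneg.2 hs1.le)]

lemma dist_homothety_le (hX : IsCAT0 X) {a u v u' v' : X} (hs : s ∈ Icc (0 : ℝ) 1)
    (hu : AtFraction s a u u') (hv : AtFraction s a v v') : dist u' v' ≤ s * dist u v := by
  have hu'v' := hX.stewart u' hs hv
  have hvu' := hX.stewart v hs hu
  rw [dist_comm u' a, hu.1, dist_comm u' v] at hu'v'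
  rw [dist_comm v a, dist_comm v u] at hvu'
  refine le_of_sq_le_sq ?_ (mul_nonneg hs.1 dist_nonneg)
  linarith [mul_le_mul_of_nonneg_left hvu' hs.1]

lemma dist_atFraction_le (hX : IsCAT0 X) {p₀ p₁ q₀ q₁ : X} (hs : s ∈ Icc (0 : ℝ) 1)
    (hp : AtFraction s p₀ p₁ p) (hq : AtFraction s q₀ q₁ q) :
    dist p q ≤ (1 - s) * dist p₀ q₀ + s * dist p₁ q₁ := by
  obtain ⟨r, hr⟩ := hX.1.exists_atFraction p₀ q₁ hs
  have hpr := hX.dist_homothety_le hs hp hr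
  have hrq := hX.dist_homothety_le ⟨sub_nonneg.2 hs.2, by linarith [hs.1]⟩ hr.symm hq.symm
  linarith [dist_triangle p r q]

lemma pythagoras (hX : IsCAT0 X) (hp : ∀ n ∈ seg p y, dist x p ≤ dist x n) :
    dist x p ^ 2 + dist p y ^ 2 ≤ dist x y ^ 2 := by
  have almost : ∀ s ∈ Ioo (0 : ℝ) 1,
      dist x p ^ 2 + dist p y ^ 2 ≤ dist x y ^ 2 + s * dist p y ^ 2 := by
    intro s hs
    obtain ⟨n, hn⟩ := hX.1.exists_atFraction p y (Ioo_subset_Icc_self hs)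
    have hle : dist x p ^ 2 ≤ dist x n ^ 2 := by gcongr; exact hp n hn.mem_seg
    refine le_of_mul_le_mul_left ?_ hs.1
    linarith [hX.stewart x (Ioo_subset_Icc_self hs) hn]
  have hlim : Tendsto (fun s : ℝ => dist x y ^ 2 + s * dist p y ^ 2) (nhdsWithin 0 (Ioi 0))
      (nhds (dist x y ^ 2)) := by
    refine tendsto_nhdsWithin_of_tendsto_nhds (Continuous.tendsto' ?_ _ _ (by simp))
    fun_prop
  exact ge_of_tendsto hlim (eventually_of_mem (Ioo_mem_nhdsGT zero_lt_one) almost)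

lemma isCompact_seg (hX : IsCAT0 X) (y z : X) : IsCompact (seg y z) := by
  obtain ⟨γ, hγ⟩ := hX.1.exists_isConstSpeedGeodesic y z
  have himage : seg y z = γ '' Icc 0 1 := by
    refine Subset.antisymm (fun m hm => ?_) ?_
    · obtain ⟨s, hs, hm⟩ := exists_atFraction_of_mem_seg hm
      exact ⟨s, hs, hX.atFraction_unique (hγ.atFraction hs) hm⟩
    · rintro _ ⟨s, hs, rfl⟩
      exact (hγ.atFraction hs).mem_seg
  rw [himage]
  exact isCompact_Icc.image_of_continuousOn hγ.lipschitzOnWith.continuousOn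

end IsCAT0

end ComparisonGeometry

section SublinearFunctions

variable {κ : ℝ → ℝ} {a s t ε A : ℝ}

namespace IsSublinearFn

lemma pos (hκ : IsSublinearFn κ) (t : ℝ) : 0 < κ t := zero_lt_one.trans_le (hκ.one_le t)

lemma mul_le_map_mul (hκ : IsSublinearFn κ) (ha : 0 ≤ a) (hs : s ∈ Icc (0 : ℝ) 1) :
    s * κ a ≤ κ (s * a) := by
  have h := hκ.concave.2 (x := a) (y := 0) ha self_mem_Ici hs.1 (sub_nonneg.2 hs.2) (by ring)
  simp only [smul_eq_mul, mul_zero, add_zero] at h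
  linarith [mul_nonneg (sub_nonneg.2 hs.2) (hκ.pos 0).le]

lemma map_add_le (hκ : IsSublinearFn κ) (hs : 0 ≤ s) (ht : 0 ≤ t) : κ (s + t) ≤ κ s + κ t := by
  rcases hs.eq_or_lt with rfl | hs
  · rw [zero_add]
    exact le_add_of_nonneg_left (hκ.pos 0).le
  have hst : 0 < s + t := by linarith
  have hκs := hκ.mul_le_map_mul hst.le (s := s / (s + t))
    ⟨by positivity, div_le_one_of_le₀ (by linarith) hst.le⟩
  have hκt := hκ.mul_le_map_mul hst.le (s := t / (s + t))
    ⟨by positivity, div_le_one_of_le₀ (by linarith) hst.le⟩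
  rw [div_mul_cancel₀ _ hst.ne'] at hκs hκt
  calc κ (s + t) = s / (s + t) * κ (s + t) + t / (s + t) * κ (s + t) := by field_simp
    _ ≤ κ s + κ t := add_le_add hκs hκt

lemma exists_le_mul_add (hκ : IsSublinearFn κ) (hε : 0 < ε) :
    ∃ C ≥ (0 : ℝ), ∀ t, 0 ≤ t → κ t ≤ ε * t + C := by
  obtain ⟨T, hT⟩ := ((hκ.sublinear.eventually_lt_const hε).and
    (eventually_gt_atTop 0)).exists_forall_of_atTop
  refine ⟨κ T, (hκ.pos T).le, fun t ht => ?_⟩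
  rcases le_total t T with htT | hTt
  · linarith [hκ.mono htT, mul_nonneg hε.le ht]
  · obtain ⟨hlt, htpos⟩ := hT t hTt
    rw [div_lt_iff₀ htpos] at hlt
    linarith [hκ.pos T]

lemma exists_mul_map_add_le (hκ : IsSublinearFn κ) (hA : 0 < A) :
    ∃ C > (0 : ℝ), ∀ t, 0 ≤ t → ∀ R, C * κ t ≤ R → A * κ (t + R) ≤ R := by
  obtain ⟨C₀, hC₀, hκ_le⟩ := hκ.exists_le_mul_add (ε := 1 / (2 * A)) (by positivity)
  refine ⟨2 * A * (1 + C₀), by positivity, fun t ht R hR => ?_⟩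
  have hκt := hκ.one_le t
  have hR0 : 0 ≤ R := le_trans (by positivity) hR
  have hsplit : A * κ (t + R) ≤ A * (κ t + κ R) := by gcongr; exact hκ.map_add_le ht hR0
  have hκR : A * κ R ≤ R / 2 + A * C₀ := by
    have := mul_le_mul_of_nonneg_left (hκ_le R hR0) hA.le
    rwa [mul_add, show A * (1 / (2 * A) * R) = R / 2 by field_simp] at this
  have hC₀t : A * C₀ ≤ A * C₀ * κ t := le_mul_of_one_le_right (by positivity) hκt
  linarith

end IsSublinearFn

end SublinearFunctions

section Projections

variable {X : Type*} [MetricSpace X] {b : ℝ → X} {π : X → X} {s u v : ℝ} {x x' y z : X}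

namespace IsGeodesicRay

lemma dist_zero (hb : IsGeodesicRay b) (hu : 0 ≤ u) : dist (b 0) (b u) = u := by
  rw [hb 0 u le_rfl hu, zero_sub, abs_neg, abs_of_nonneg hu]

lemma apply_dist_zero (hb : IsGeodesicRay b) (hy : y ∈ rayIm b) : b (dist (b 0) y) = y := by
  obtain ⟨u, hu, rfl⟩ := hy
  rw [hb.dist_zero hu]

lemma atFraction (hb : IsGeodesicRay b) (hu : 0 ≤ u) (hv : 0 ≤ v) (hs : s ∈ Icc (0 : ℝ) 1) :
    AtFraction s (b u) (b v) (b ((1 - s) * u + s * v)) := by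
  have hw : 0 ≤ (1 - s) * u + s * v :=
    add_nonneg (mul_nonneg (sub_nonneg.2 hs.2) hu) (mul_nonneg hs.1 hv)
  refine ⟨?_, ?_⟩
  · rw [hb u _ hu hw, hb u v hu hv, show u - ((1 - s) * u + s * v) = s * (u - v) by ring, abs_mul,
      abs_of_nonneg hs.1]
  · rw [hb _ v hw hv, hb u v hu hv, show (1 - s) * u + s * v - v = (1 - s) * (u - v) by ring,
      abs_mul, abs_of_nonneg (sub_nonneg.2 hs.2)]

lemma seg_subset_rayIm (hb : IsGeodesicRay b) (hX : IsCAT0 X) (hy : y ∈ rayIm b)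
    (hz : z ∈ rayIm b) : seg y z ⊆ rayIm b := by
  obtain ⟨u, hu, rfl⟩ := hy
  obtain ⟨v, hv, rfl⟩ := hz
  intro m hm
  obtain ⟨s, hs, hm⟩ := exists_atFraction_of_mem_seg hm
  rw [hX.atFraction_unique hm (hb.atFraction hu hv hs)]
  exact mem_image_of_mem b
    (add_nonneg (mul_nonneg (sub_nonneg.2 hs.2) hu) (mul_nonneg hs.1 hv))

end IsGeodesicRay

namespace IsProj

lemma dist_le (hπ : IsProj b π) (hy : y ∈ rayIm b) : dist x (π x) ≤ dist x y :=
  (hπ x).2.trans_le (infDist_le_dist_of_mem hy)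

lemma pythagoras (hπ : IsProj b π) (hX : IsCAT0 X) (hb : IsGeodesicRay b) (hy : y ∈ rayIm b) :
    dist x (π x) ^ 2 + dist (π x) y ^ 2 ≤ dist x y ^ 2 :=
  hX.pythagoras fun _ hn => hπ.dist_le (hb.seg_subset_rayIm hX (hπ x).1 hy hn)

lemma eq_of_dist_le (hπ : IsProj b π) (hX : IsCAT0 X) (hb : IsGeodesicRay b) (hy : y ∈ rayIm b)
    (h : dist x y ≤ dist x (π x)) : π x = y := by
  have hsq : dist x y ^ 2 ≤ dist x (π x) ^ 2 := by gcongr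
  refine dist_eq_zero.1 (pow_eq_zero_iff two_ne_zero |>.1 (le_antisymm ?_ (sq_nonneg _)))
  linarith [hπ.pythagoras hX hb hy (x := x)]

lemma apply_of_mem (hπ : IsProj b π) (hx : x ∈ rayIm b) : π x = x :=
  (dist_le_zero.1 (by simpa using hπ.dist_le hx (x := x))).symm

lemma apply_of_mem_seg (hπ : IsProj b π) (hX : IsCAT0 X) (hb : IsGeodesicRay b)
    (hx' : x' ∈ seg x (π x)) : π x' = π x := by
  refine hπ.eq_of_dist_le hX hb (hπ x).1 ?_
  linarith [dist_add_dist_of_mem_seg hx', hπ.dist_le (hπ x').1 (x := x), dist_triangle x x' (π x')]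

lemma dist_apply_le (hπ : IsProj b π) (hX : IsCAT0 X) (hb : IsGeodesicRay b) (x y : X) :
    dist (π x) (π y) ≤ dist x y := by
  have hquad := hX.cauchy_schwarz x y (π y) (π x)
  have hx := hπ.pythagoras hX hb (hπ y).1 (x := x)
  have hy := hπ.pythagoras hX hb (hπ x).1 (x := y)
  rw [dist_comm (π y) (π x)] at hy hquad
  refine le_of_sq_le_sq ?_ dist_nonneg
  linarith [sq_nonneg (dist x (π x) - dist y (π y))]

lemma lipschitzWith_one (hπ : IsProj b π) (hX : IsCAT0 X) (hb : IsGeodesicRay b) :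
    LipschitzWith 1 π :=
  LipschitzWith.of_dist_le_mul fun x y => by simpa using hπ.dist_apply_le hX hb x y

lemma dist_zero_apply_le (hπ : IsProj b π) (hX : IsCAT0 X) (hb : IsGeodesicRay b) (x : X) :
    dist (b 0) (π x) ≤ dist (b 0) x := by
  simpa [hπ.apply_of_mem (mem_image_of_mem b self_mem_Ici)] using hπ.dist_apply_le hX hb (b 0) x

end IsProj

end Projections

section SlimToContracting

variable {X : Type*} [MetricSpace X] {x y p q : X} {e : ℝ}

namespace IsCAT0

lemma le_dist_mul_of_almost_geodesic (hX : IsCAT0 X) (he : e ≤ dist p q)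
    (hx : dist x p + dist p q - e ≤ dist x q) (hy : dist y q + dist p q - e ≤ dist y p) :
    (dist x p + dist y q) * (dist p q - e) + (dist p q - e) ^ 2 ≤ dist x y * dist p q := by
  have hquad := hX.cauchy_schwarz q y x p
  rw [dist_comm q x, dist_comm q y, dist_comm y x, dist_comm q p] at hquad
  have hx_sq : (dist x p + dist p q - e) ^ 2 ≤ dist x q ^ 2 :=
    pow_le_pow_left₀ (by linarith [dist_nonneg (x := x) (y := p)]) hx 2
  have hy_sq : (dist y q + dist p q - e) ^ 2 ≤ dist y p ^ 2 :=
    pow_le_pow_left₀ (by linarith [dist_nonneg (x := y) (y := q)]) hy 2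
  linarith

lemma sq_dist_le_of_mem_seg (hX : IsCAT0 X) {x₁ : X} (hx₁ : x₁ ∈ seg p x)
    (hxy : dist x y ≤ dist x p) (hxp : 0 < dist x p) :
    dist x₁ y ^ 2 ≤ dist y p ^ 2 + dist p x₁ ^ 2 := by
  have hst := hX.stewart_of_mem_seg y hx₁
  have hadd := dist_add_dist_of_mem_seg hx₁
  rw [dist_comm p x] at hst hadd
  rw [dist_comm y x₁, dist_comm y x, eq_sub_of_add_eq' hadd] at hst
  have hsq : dist p x₁ * dist x y ^ 2 ≤ dist p x₁ * dist x p ^ 2 := by gcongr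
  refine le_of_mul_le_mul_left ?_ hxp
  linarith [mul_nonneg (dist_nonneg (x := p) (y := x₁)) (sq_nonneg (dist y p))]

-- If `y` is closer to `q` than `x` is to `p`, cut `[p, x]` down to the length of `[q, y]` at `x₁`:
-- then `d(x₁, y)` is about `2 d(y, q) + d(p, q)`, too much for `d(x, y) ≤ d(x, p)`.
lemma dist_lt_of_almost_geodesic (hX : IsCAT0 X) (hpq : 0 < dist p q) (he : 10 * e ≤ dist p q)
    (hx : dist x p + dist p q - e ≤ dist x q) (hy : dist y q + dist p q - e ≤ dist y p) :
    dist x p < dist x y := by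
  rcases le_total (dist x p) (dist y q) with hle | hle
  · refine lt_of_mul_lt_mul_right ?_ hpq.le
    have hmain := hX.le_dist_mul_of_almost_geodesic (by linarith) hx hy
    nlinarith [dist_nonneg (x := x) (y := p)]
  by_contra! hxy
  have hyq : dist p q - e ≤ dist y q := by linarith [dist_triangle x y q]
  have hyp : dist y p ≤ dist y q + dist p q :=
    dist_triangle_right y p q
  obtain ⟨x₁, hx₁, hpx₁⟩ := hX.1.exists_mem_seg_dist_eq (y := p) (z := x) dist_nonneg
    (hle.trans_eq (dist_comm x p))
  have hadd := dist_add_dist_of_mem_seg hx₁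
  have hx₁q : dist x₁ p + dist p q - e ≤ dist x₁ q := by
    linarith [dist_triangle x x₁ q, dist_comm x₁ p, dist_comm x x₁, dist_comm x p]
  have hmain := hX.le_dist_mul_of_almost_geodesic (by linarith) hx₁q hy
  rw [dist_comm x₁ p, hpx₁] at hmain
  have lower : 1.8 * dist y q + 0.81 * dist p q ≤ dist x₁ y := by
    refine le_of_mul_le_mul_right ?_ hpq
    nlinarith
  have upper := hX.sq_dist_le_of_mem_seg hx₁ hxy (by linarith)
  rw [hpx₁] at upper
  nlinarith [dist_nonneg (x := y) (y := p), dist_nonneg (x := x₁) (y := y)]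

end IsCAT0

variable {κ : ℝ → ℝ} {b : ℝ → X} {π : X → X}

theorem SlimCond1.kappaContracting (hX : IsCAT0 X) (hκ : IsSublinearFn κ) (hb : IsGeodesicRay b)
    (hπ : IsProj b π) (h : SlimCond1 κ (b 0) b π) : KappaContracting κ (b 0) b π := by
  obtain ⟨c, hc, hslim⟩ := h
  refine ⟨40 * c, by positivity, fun x y hxy => ?_⟩
  rw [← (hπ x).2] at hxy
  by_contra! hlt
  have hy_norm : dist (b 0) y ≤ dist (b 0) x + dist (b 0) x := by
    linarith [dist_triangle (b 0) x y, dist_comm x (b 0),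
      hπ.dist_le (x := x) (mem_image_of_mem b self_mem_Ici)]
  have hκx : κ (dist (b 0) (π x)) ≤ 2 * κ (dist (b 0) x) := by
    linarith [hκ.mono (hπ.dist_zero_apply_le hX hb x), hκ.pos (dist (b 0) x)]
  have hκy : κ (dist (b 0) (π y)) ≤ 2 * κ (dist (b 0) x) :=
    calc κ (dist (b 0) (π y)) ≤ κ (dist (b 0) x + dist (b 0) x) :=
          hκ.mono ((hπ.dist_zero_apply_le hX hb y).trans hy_norm)
      _ ≤ 2 * κ (dist (b 0) x) := (hκ.map_add_le dist_nonneg dist_nonneg).trans_eq (by ring)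
  have hslim_x := hslim x (π y) (hπ y).1
  have hslim_y := hslim y (π x) (hπ x).1
  have hx := dist_add_dist_le_of_infDist_seg (π x) x (π y)
  have hy := dist_add_dist_le_of_infDist_seg (π y) y (π x)
  rw [dist_comm (π y) (π x)] at hy
  have hpos : 0 ≤ c * κ (dist (b 0) x) := mul_nonneg hc (hκ.pos _).le
  refine hxy.not_gt (hX.dist_lt_of_almost_geodesic (p := π x) (q := π y)
    (e := 4 * (c * κ (dist (b 0) x))) ?_ ?_ ?_ ?_)
  · linarith
  · linarith
  · linarith [mul_le_mul_of_nonneg_left hκx hc]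
  · linarith [mul_le_mul_of_nonneg_left hκy hc]

end SlimToContracting

section Paths

variable {X : Type*} [MetricSpace X] {S : Set X} {p q r : X} {L L₁ L₂ : ℝ≥0∞}

/-- There is a path from `p` to `q` inside `S` of length at most `L`. Length is the variation of the
path, extended to a function on `ℝ`, over `[0, 1]`. -/
def JoinedWithin (S : Set X) (p q : X) (L : ℝ≥0∞) : Prop :=
  ∃ γ : Path p q, range γ ⊆ S ∧ eVariationOn γ.extend (Icc 0 1) ≤ L

namespace JoinedWithin

lemma mono (h : JoinedWithin S p q L₁) (hL : L₁ ≤ L₂) : JoinedWithin S p q L₂ :=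
  h.imp fun _ hγ => ⟨hγ.1, hγ.2.trans hL⟩

lemma symm (h : JoinedWithin S p q L) : JoinedWithin S q p L := by
  obtain ⟨γ, hS, hL⟩ := h
  refine ⟨γ.symm, γ.symm_range.trans_subset hS, le_trans ?_ hL⟩
  rw [γ.extend_symm]
  refine eVariationOn.comp_le_of_antitoneOn γ.extend (1 - ·) ?_ fun s hs => ?_
  · exact fun s _ t _ hst => sub_le_sub_left hst 1
  · exact ⟨sub_nonneg.2 hs.2, sub_le_self 1 hs.1⟩

lemma trans (h₁ : JoinedWithin S p q L₁) (h₂ : JoinedWithin S q r L₂) :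
    JoinedWithin S p r (L₁ + L₂) := by
  obtain ⟨γ₁, hS₁, hL₁⟩ := h₁
  obtain ⟨γ₂, hS₂, hL₂⟩ := h₂
  refine ⟨γ₁.trans γ₂, (γ₁.trans_range γ₂).trans_subset (union_subset hS₁ hS₂), ?_⟩
  have hsplit := eVariationOn.Icc_add_Icc (γ₁.trans γ₂).extend (s := univ) (a := 0) (b := 1 / 2)
    (c := 1) (by norm_num) (by norm_num) (mem_univ _)
  simp only [univ_inter] at hsplit
  rw [← hsplit]
  gcongr
  · rw [eVariationOn.congr fun s hs => γ₁.extend_trans_of_le_half γ₂ hs.2]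
    refine (eVariationOn.comp_le_of_monotoneOn γ₁.extend (2 * ·) ?_ fun s hs => ?_).trans hL₁
    · exact fun s _ t _ hst => by dsimp only; linarith
    · exact ⟨by linarith [hs.1], by linarith [hs.2]⟩
  · rw [eVariationOn.congr fun s hs => γ₁.extend_trans_of_half_le γ₂ hs.1]
    refine (eVariationOn.comp_le_of_monotoneOn γ₂.extend (2 * · - 1) ?_ fun s hs => ?_).trans hL₂
    · exact fun s _ t _ hst => by dsimp only; linarith
    · exact ⟨by linarith [hs.1], by linarith [hs.2]⟩

lemma rhoKappa_le {κ : ℝ → ℝ} {b : ℝ → X} {r t : ℝ}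
    (h : JoinedWithin (ball (b t) (r * κ t))ᶜ (b (t - r * κ t)) (b (t + r * κ t)) L) :
    rhoKappa κ b r t ≤ L := by
  obtain ⟨γ, hS, hL⟩ := h
  have hmem : (γ.extend : ℝ → X) ∈ pathsOutside κ b r t :=
    ⟨γ.continuous_extend.continuousOn, γ.extend_zero, γ.extend_one, fun s hs =>
      hS (γ.extend_apply hs ▸ mem_range_self _)⟩
  exact (iInf₂_le _ hmem).trans hL

end JoinedWithin

lemma GeodesicSpace.joinedWithin (hX : GeodesicSpace X) (hS : seg p q ⊆ S) :
    JoinedWithin S p q (edist p q) := by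
  obtain ⟨γ, hγ⟩ := hX.exists_isConstSpeedGeodesic p q
  have hcont := hγ.lipschitzOnWith.continuousOn
  refine ⟨Path.ofLine hcont hγ.zero hγ.one, ?_, ?_⟩
  · rintro _ ⟨s, rfl⟩
    exact hS (hγ.atFraction s.2).mem_seg
  · have hext : EqOn (Path.ofLine hcont hγ.zero hγ.one).extend γ (Icc 0 1) := fun s hs => by
      rw [Path.extend_apply _ hs]
      rfl
    rw [eVariationOn.congr hext]
    calc eVariationOn (γ ∘ id) (Icc 0 1) ≤ nndist p q * eVariationOn id (Icc (0 : ℝ) 1) :=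
          hγ.lipschitzOnWith.comp_eVariationOn_le (mapsTo_id _)
      _ = edist p q := by simp

lemma GeodesicSpace.joinedWithin_compl_ball (hX : GeodesicSpace X) {w : X} {R T : ℝ}
    (hw : ∀ z ∈ seg p q, R ≤ dist z w) (hT : dist p q ≤ T) :
    JoinedWithin (ball w R)ᶜ p q (ENNReal.ofReal T) := by
  refine (hX.joinedWithin fun z hz => ?_).mono (edist_le_ofReal (dist_nonneg.trans hT) |>.2 hT)
  simpa using hw z hz

end Paths

section SuperlinearToSlim

variable {X : Type*} [MetricSpace X] {m p w x x' y z : X} {R t : ℝ}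

lemma dist_le_two_mul_dist_of_mem_seg (hz : z ∈ seg p x) (hw : dist x p ≤ dist x w) :
    dist p w ≤ 2 * dist z w := by
  linarith [dist_add_dist_of_mem_seg hz, dist_triangle x z w, dist_triangle p z w, dist_comm x z,
    dist_comm x p]

namespace IsCAT0

lemma sq_chord_le (hX : IsCAT0 X) (hpx : p ≠ x) (hm : ∀ n ∈ seg m x, dist p m ≤ dist p n)
    (hx' : x' ∈ seg p x) (hpx' : dist p x' = dist p m) : dist m x' ^ 2 ≤ 2 * dist p m ^ 2 := by
  have hpyth := mul_le_mul_of_nonneg_left (hX.pythagoras hm) (dist_nonneg (x := p) (y := m))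
  have hst := hX.stewart_of_mem_seg m hx'
  rw [eq_sub_of_add_eq' (dist_add_dist_of_mem_seg hx'), dist_comm m p, hpx'] at hst
  refine le_of_mul_le_mul_left ?_ (dist_pos.2 hpx)
  linarith [pow_nonneg (dist_nonneg (x := p) (y := m)) 3]

lemma joinedWithin_chord (hX : IsCAT0 X) (hR : 0 < R) (hpw : dist p w = 2 * R)
    (hpm : dist p m = 12 * R) (hm : ∀ n ∈ seg m x, dist p m ≤ dist p n)
    (hx' : x' ∈ seg p x) (hpx' : dist p x' = 12 * R) :
    JoinedWithin (ball w R)ᶜ m x' (ENNReal.ofReal (17 * R)) := by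
  have hpx : p ≠ x := dist_pos.1 (by linarith [hm x (right_mem_seg m x)])
  have hchord : dist m x' ≤ 17 * R := by
    refine le_of_sq_le_sq ?_ (by positivity)
    nlinarith [hX.sq_chord_le hpx hm hx' (hpx'.trans hpm.symm)]
  refine hX.1.joinedWithin_compl_ball (fun z hz => ?_) hchord
  linarith [dist_add_dist_le_of_mem_seg p hz, dist_comm m p, dist_triangle_right p z w,
    dist_triangle p w z, dist_comm w z]

lemma joinedWithin_radius (hX : IsCAT0 X) (hpw : dist p w = 2 * R) (hw : dist x p ≤ dist x w)
    (hx' : x' ∈ seg p x) : JoinedWithin (ball w R)ᶜ p x' (ENNReal.ofReal (dist p x')) := by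
  refine hX.1.joinedWithin_compl_ball (fun z hz => ?_) le_rfl
  have hz' : z ∈ seg p x := by
    rw [seg_comm] at hz hx' ⊢
    exact seg_subset_of_mem hx' hz
  linarith [dist_le_two_mul_dist_of_mem_seg hz' hw]

-- The detour runs from `c R` back to `c 0`, out along `[c 0, x]` to distance `12 R`, across to `m`
-- and then to `c (12 * R)` along chords, and back along `c` to `c (3 * R)`.
lemma joinedWithin_detour (hX : IsCAT0 X) {c : ℝ → X} (hR : 0 < R)
    (hc : ∀ s s', 0 ≤ s → s ≤ s' → s' ≤ 12 * R → dist (c s) (c s') = s' - s)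
    (hy : c (12 * R) ∈ seg (c 0) y) (hx : dist x (c 0) ≤ dist x (c (2 * R))) (hm : m ∈ seg x y)
    (hmin : ∀ n ∈ seg x y, dist (c 0) m ≤ dist (c 0) n) (hcm : dist (c 0) m = 12 * R) :
    JoinedWithin (ball (c (2 * R)) R)ᶜ (c R) (c (3 * R)) (ENNReal.ofReal (56 * R)) := by
  have h01 := hc 0 R le_rfl (by linarith) (by linarith)
  have h02 := hc 0 (2 * R) le_rfl (by linarith) (by linarith)
  have h012 := hc 0 (12 * R) le_rfl (by linarith) le_rfl
  have h212 := hc (2 * R) (12 * R) (by linarith) (by linarith) le_rfl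
  have h312 := hc (3 * R) (12 * R) (by linarith) (by linarith) le_rfl
  rw [sub_zero] at h01 h02 h012
  obtain ⟨x', hx', hcx'⟩ := hX.1.exists_mem_seg_dist_eq (h := 12 * R) (by positivity)
    (hcm.symm.trans_le (hmin x (left_mem_seg x y)))
  have back : JoinedWithin (ball (c (2 * R)) R)ᶜ (c R) (c 0) (ENNReal.ofReal R) :=
    hX.1.joinedWithin_compl_ball (fun z hz => by
      linarith [dist_add_dist_of_mem_seg hz, dist_comm (c 0) (c R), dist_comm (c 0) z,
        dist_triangle (c 0) z (c (2 * R)), dist_nonneg (x := c R) (y := z)])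
      (by rw [dist_comm, h01])
  have out := hX.joinedWithin_radius h02 hx hx'
  have across := hX.joinedWithin_chord hR h02 hcm
    (fun n hn => hmin n (seg_comm x y ▸ seg_subset_of_mem (seg_comm x y ▸ hm) hn)) hx' hcx'
  have down := hX.joinedWithin_chord hR h02 hcm
    (fun n hn => hmin n (seg_subset_of_mem hm hn)) hy h012
  have along : JoinedWithin (ball (c (2 * R)) R)ᶜ (c (12 * R)) (c (3 * R))
      (ENNReal.ofReal (9 * R)) :=
    hX.1.joinedWithin_compl_ball (fun z hz => by
      linarith [dist_add_dist_of_mem_seg hz, dist_comm (c (2 * R)) (c (12 * R)),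
        dist_comm (c (3 * R)) (c (12 * R)), dist_triangle (c (12 * R)) z (c (2 * R)),
        dist_nonneg (x := z) (y := c (3 * R))])
      (by rw [dist_comm, h312]; linarith)
  rw [hcx'] at out
  refine ((((back.trans out).trans across.symm).trans down).trans along).mono (le_of_eq ?_)
  repeat rw [← ENNReal.ofReal_add (by positivity) (by positivity)]
  ring_nf

end IsCAT0

variable {κ : ℝ → ℝ} {b : ℝ → X} {π : X → X} {u : ℝ}

namespace IsGeodesicRay

lemma mem_seg (hb : IsGeodesicRay b) {s t u : ℝ} (hs : 0 ≤ s) (hst : s ≤ t) (htu : t ≤ u) :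
    b t ∈ seg (b s) (b u) := by
  have ht := hs.trans hst
  have hu := ht.trans htu
  simp only [seg, mem_ofPred_eq, hb s t hs ht, hb t u ht hu, hb s u hs hu]
  rw [abs_of_nonpos (by linarith), abs_of_nonpos (by linarith), abs_of_nonpos (by linarith)]
  ring

lemma joinedWithin_of_le (hb : IsGeodesicRay b) (hX : IsCAT0 X) (hπ : IsProj b π) (hR : 0 < R)
    (ht : 0 ≤ t) (htu : t ≤ u) (hx : π x = b t) (hm : m ∈ seg x (b u))
    (hmin : ∀ n ∈ seg x (b u), dist (b t) m ≤ dist (b t) n) (htm : dist (b t) m = 12 * R) :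
    JoinedWithin (ball (b (t + 2 * R)) R)ᶜ (b (t + 2 * R - R)) (b (t + 2 * R + R))
      (ENNReal.ofReal (56 * R)) := by
  have hu : t + 12 * R ≤ u := by
    have := hmin (b u) (right_mem_seg x (b u))
    rw [htm, hb t u ht (ht.trans htu), abs_of_nonpos (by linarith)] at this
    linarith
  have hproj : dist x (b t) ≤ dist x (b (t + 2 * R)) :=
    hx ▸ hπ.dist_le (mem_image_of_mem b (show 0 ≤ t + 2 * R by positivity))
  have := hX.joinedWithin_detour (c := fun s => b (t + s)) hR (fun s s' hs hss' _ => by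
      rw [hb _ _ (by linarith) (by linarith), abs_of_nonpos (by linarith)]; ring)
    (by simpa using hb.mem_seg ht (by linarith) hu) (by simpa using hproj) hm (by simpa using hmin)
    (by simpa using htm)
  convert this using 2 <;> ring

lemma joinedWithin_of_ge (hb : IsGeodesicRay b) (hX : IsCAT0 X) (hπ : IsProj b π) (hR : 0 < R)
    (hu0 : 0 ≤ u) (hut : u ≤ t) (hx : π x = b t) (hm : m ∈ seg x (b u))
    (hmin : ∀ n ∈ seg x (b u), dist (b t) m ≤ dist (b t) n) (htm : dist (b t) m = 12 * R) :
    12 * R ≤ t ∧ JoinedWithin (ball (b (t - 2 * R)) R)ᶜ (b (t - 2 * R - R)) (b (t - 2 * R + R))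
      (ENNReal.ofReal (56 * R)) := by
  have hu : u ≤ t - 12 * R := by
    have := hmin (b u) (right_mem_seg x (b u))
    rw [htm, hb t u (hu0.trans hut) hu0, abs_of_nonneg (by linarith)] at this
    linarith
  have hproj : dist x (b t) ≤ dist x (b (t - 2 * R)) :=
    hx ▸ hπ.dist_le (mem_image_of_mem b (show 0 ≤ t - 2 * R by linarith))
  have hmem : b (t - 12 * R) ∈ seg (b t) (b u) :=
    seg_comm (b u) (b t) ▸ hb.mem_seg hu0 hu (by linarith)
  have := hX.joinedWithin_detour (c := fun s => b (t - s)) hR (fun s s' _ hss' hs' => by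
      rw [hb _ _ (by linarith) (by linarith), abs_of_nonneg (by linarith)]; ring)
    (by simpa using hmem) (by simpa using hproj) hm (by simpa using hmin) (by simpa using htm)
  refine ⟨by linarith, ?_⟩
  convert this.symm using 2 <;> ring

end IsGeodesicRay

lemma JoinedWithin.divKappa_le (hκt : 0 < κ t) (hRt : R < t) {T : ℝ}
    (h : JoinedWithin (ball (b t) R)ᶜ (b (t - R)) (b (t + R)) (ENNReal.ofReal T)) :
    divKappa κ b (R / κ t) ≤ ENNReal.ofReal (T / κ t) := by
  have hR : R / κ t * κ t = R := div_mul_cancel₀ R hκt.ne'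
  calc divKappa κ b (R / κ t) ≤ rhoKappa κ b (R / κ t) t / ENNReal.ofReal (κ t) :=
        iInf₂_le t (by simpa [hR] using hRt)
    _ ≤ ENNReal.ofReal T / ENNReal.ofReal (κ t) := by
        gcongr
        exact JoinedWithin.rhoKappa_le (by rwa [hR])
    _ = ENNReal.ofReal (T / κ t) := (ENNReal.ofReal_div_of_pos hκt).symm

lemma exists_forall_not_joinedWithin (hκ : IsSublinearFn κ)
    (h : Tendsto (fun r : ℝ => divKappa κ b r / ENNReal.ofReal r) atTop (nhds ⊤)) (A : ℝ) :
    ∃ r₀ > (0 : ℝ), ∀ R t, R < t → r₀ * κ t ≤ R →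
      ¬ JoinedWithin (ball (b t) R)ᶜ (b (t - R)) (b (t + R)) (ENNReal.ofReal (A * R)) := by
  obtain ⟨r₁, hr₁⟩ :=
    (h.eventually_const_lt (ENNReal.ofReal_lt_top (r := A))).exists_forall_of_atTop
  refine ⟨max r₁ 1, by positivity, fun R t hRt hR hjoin => ?_⟩
  have hκt := hκ.pos t
  have hr : max r₁ 1 ≤ R / κ t := (le_div_iff₀ hκt).2 hR
  have hr0 : 0 < R / κ t := (zero_lt_one.trans_le (le_max_right r₁ 1)).trans_le hr
  refine (hr₁ (R / κ t) ((le_max_left r₁ 1).trans hr)).not_ge ?_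
  refine ENNReal.div_le_of_le_mul ((hjoin.divKappa_le hκt hRt).trans_eq ?_)
  rw [mul_div_assoc, ENNReal.ofReal_mul' hr0.le]

theorem SlimCond1.of_tendsto_divKappa (hX : IsCAT0 X) (hκ : IsSublinearFn κ)
    (hb : IsGeodesicRay b) (hπ : IsProj b π)
    (h : Tendsto (fun r : ℝ => divKappa κ b r / ENNReal.ofReal r) atTop (nhds ⊤)) :
    SlimCond1 κ (b 0) b π := by
  obtain ⟨r₀, hr₀, hno⟩ := exists_forall_not_joinedWithin hκ h 56
  obtain ⟨C, hC, hκ_le⟩ := hκ.exists_mul_map_add_le (A := 2 * r₀) (by positivity)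
  refine ⟨6 * C, by positivity, ?_⟩
  rintro x _ ⟨u, hu, rfl⟩
  obtain ⟨t, ht, hx⟩ := (hπ x).1
  rw [mem_Ici] at ht hu
  rw [← hx, hb.dist_zero ht]
  obtain ⟨m, hm, hdist⟩ :=
    (hX.isCompact_seg x (b u)).exists_infDist_eq_dist ⟨x, left_mem_seg x (b u)⟩ (b t)
  have hmin : ∀ n ∈ seg x (b u), dist (b t) m ≤ dist (b t) n := fun n hn =>
    hdist ▸ infDist_le_dist_of_mem hn
  by_contra! hlt
  rw [hdist] at hlt
  set R := dist (b t) m / 12 with hRdef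
  have hκt := hκ.pos t
  have hlarge : C * κ t ≤ 2 * R := by linarith
  have hR : 0 < R := by linarith [mul_pos hC hκt]
  have hκ2 := hκ_le t ht (2 * R) hlarge
  rcases le_total t u with htu | hut
  · refine hno R (t + 2 * R) (by linarith) (by linarith)
      (hb.joinedWithin_of_le hX hπ hR ht htu hx.symm hm hmin (by linarith))
  · obtain ⟨hRt, hjoin⟩ := hb.joinedWithin_of_ge hX hπ hR hu hut hx.symm hm hmin (by linarith)
    refine hno R (t - 2 * R) (by linarith) ?_ hjoin
    have hmono : κ (t - 2 * R) ≤ κ (t + 2 * R) := hκ.mono (by linarith)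
    linarith [mul_le_mul_of_nonneg_left hmono hr₀.le]

end SuperlinearToSlim

section ContractingToQuadratic

lemma natCast_mul_le_eVariationOn {E : Type*} [PseudoEMetricSpace E] {γ : ℝ → E} {φ : ℝ → ℝ}
    {s c Δ : ℝ} {ℓ : ℝ≥0∞} (n : ℕ) (hsc : s ≤ c) (hφ : ContinuousOn φ (Icc s c)) (hΔ : 0 ≤ Δ)
    (hn : φ s + n * Δ ≤ φ c)
    (hstep : ∀ v ∈ Icc s c, ∀ w ∈ Icc s c, φ s ≤ φ v → φ w = φ v + Δ → φ w ≤ φ s + n * Δ →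
      ℓ ≤ edist (γ v) (γ w)) :
    n * ℓ ≤ eVariationOn γ (Icc s c) := by
  induction n generalizing s with
  | zero => simp
  | succ n ih =>
    have hnΔ : 0 ≤ n * Δ := by positivity
    push_cast at hn hstep
    obtain ⟨u, hu, hφu⟩ : ∃ u ∈ Icc s c, φ u = φ s + Δ :=
      intermediate_value_Icc hsc hφ ⟨by linarith, by linarith⟩
    have hsub : Icc u c ⊆ Icc s c := Icc_subset_Icc_left hu.1
    have hrest : n * ℓ ≤ eVariationOn γ (Icc u c) :=
      ih hu.2 (hφ.mono hsub) (by linarith) fun v hv w hw hv' hvw hw' =>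
        hstep v (hsub hv) w (hsub hw) (by linarith) hvw (by linarith)
    have hfirst : ℓ ≤ eVariationOn γ (Icc s u) :=
      (hstep s (left_mem_Icc.2 hsc) u hu le_rfl hφu (by linarith)).trans
        (eVariationOn.edist_le γ (left_mem_Icc.2 hu.1) (right_mem_Icc.2 hu.1))
    have hsplit := eVariationOn.Icc_add_Icc γ (s := univ) hu.1 hu.2 (mem_univ u)
    simp only [univ_inter] at hsplit
    rw [← hsplit, Nat.cast_add_one, add_mul, one_mul, add_comm]
    gcongr

variable {X : Type*} [MetricSpace X] {κ : ℝ → ℝ} {b : ℝ → X} {π : X → X} {x y z : X}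
  {H M R r t : ℝ}

/-- A variant of `κ`-contraction in which the shadow of the half-size ball about `x` is bounded in
terms of the projection of `x` instead of `x` itself, provided `x` is at height at least
`M * κ ‖π x‖` above the ray. -/
def HalfContractingWith (κ : ℝ → ℝ) (b : ℝ → X) (π : X → X) (M : ℝ) : Prop :=
  ∀ x y : X, M * κ (dist (b 0) (π x)) ≤ dist x (π x) → dist x y ≤ dist x (π x) / 2 →
    dist (π x) (π y) ≤ M * κ (dist (b 0) (π x)) / 2

namespace IsProj

lemma exists_mem_seg_dist_apply_eq (hπ : IsProj b π) (hX : IsCAT0 X) (hb : IsGeodesicRay b)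
    (hH : 0 ≤ H) (hxy : H ≤ dist (π x) (π y)) : ∃ z ∈ seg x y, dist (π x) (π z) = H := by
  obtain ⟨γ, hγ⟩ := hX.1.exists_isConstSpeedGeodesic x y
  have hcont : ContinuousOn (fun s => dist (π x) (π (γ s))) (Icc 0 1) :=
    (continuous_const.dist (hπ.lipschitzWith_one hX hb).continuous).comp_continuousOn
      hγ.lipschitzOnWith.continuousOn
  obtain ⟨s, hs, hsH⟩ := intermediate_value_Icc zero_le_one hcont
    (show H ∈ Icc _ _ by simpa [hγ.zero, hγ.one] using ⟨hH, hxy⟩)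
  exact ⟨γ s, (hγ.atFraction hs).mem_seg, hsH⟩

lemma exists_lower_pair (hπ : IsProj b π) (hX : IsCAT0 X) (hb : IsGeodesicRay b) (hH : 0 < H)
    (hHx : H ≤ dist x (π x)) (hxz : dist x z ≤ dist x (π x) / 2)
    (hshadow : dist (π x) (π z) = H / 2) :
    ∃ x' z', π x' = π x ∧ π z' = π z ∧ dist (π x) x' = H ∧ dist x' z' ≤ H := by
  have hpos : 0 < dist x (π x) := hH.trans_le hHx
  have hs : H / dist x (π x) ∈ Icc (0 : ℝ) 1 := ⟨by positivity, (div_le_one hpos).2 hHx⟩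
  obtain ⟨x', hx'⟩ := hX.1.exists_atFraction (π x) x hs
  obtain ⟨z', hz'⟩ := hX.1.exists_atFraction (π z) z hs
  refine ⟨x', z', hπ.apply_of_mem_seg hX hb (seg_comm (π x) x ▸ hx'.mem_seg),
    hπ.apply_of_mem_seg hX hb (seg_comm (π z) z ▸ hz'.mem_seg), ?_, ?_⟩
  · rw [hx'.1, dist_comm (π x) x, div_mul_cancel₀ _ hpos.ne']
  · calc dist x' z'
        ≤ (1 - H / dist x (π x)) * dist (π x) (π z) + H / dist x (π x) * dist x z :=
          hX.dist_atFraction_le hs hx' hz'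
      _ ≤ 1 * (H / 2) + H / dist x (π x) * (dist x (π x) / 2) := by
          rw [hshadow]
          gcongr
          linarith [hs.1]
      _ = H := by field_simp; ring

end IsProj

lemma KappaContracting.exists_halfContractingWith (h : KappaContracting κ (b 0) b π)
    (hX : IsCAT0 X) (hκ : IsSublinearFn κ) (hb : IsGeodesicRay b) (hπ : IsProj b π) :
    ∃ M > (0 : ℝ), HalfContractingWith κ b π M := by
  obtain ⟨c, hc, hcontr⟩ := h
  obtain ⟨M, hM, hκ_le⟩ := hκ.exists_mul_map_add_le (A := 2 * c + 1) (by positivity)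
  refine ⟨M, hM, fun x y hHx hxy => ?_⟩
  by_contra! hlt
  set H := M * κ (dist (b 0) (π x))
  have hH : 0 < H := mul_pos hM (hκ.pos _)
  obtain ⟨z, hz, hshadow⟩ := hπ.exists_mem_seg_dist_apply_eq hX hb (half_pos hH).le hlt.le
  have hxz : dist x z ≤ dist x (π x) / 2 := by
    linarith [dist_add_dist_of_mem_seg hz, dist_nonneg (x := z) (y := y)]
  obtain ⟨x', z', hx', hz', hheight, hx'z'⟩ := hπ.exists_lower_pair hX hb hH hHx hxz hshadow
  have hbound : H / 2 ≤ c * κ (dist (b 0) x') := by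
    rw [← hshadow, ← hx', ← hz']
    exact hcontr x' z' (by rwa [← (hπ x').2, hx', dist_comm x' (π x), hheight])
  have hmono : κ (dist (b 0) x') ≤ κ (dist (b 0) (π x) + H) :=
    hκ.mono (hheight ▸ dist_triangle (b 0) (π x) x')
  linarith [hκ_le _ dist_nonneg H le_rfl, mul_le_mul_of_nonneg_left hmono hc,
    hκ.pos (dist (b 0) (π x) + H)]

namespace HalfContractingWith

lemma div_four_le_dist (h : HalfContractingWith κ b π M) (hκ : IsSublinearFn κ)
    (hb : IsGeodesicRay b) (hπ : IsProj b π) (hM : 0 < M) (hR : 4 * M * κ t ≤ R) (hRt : R < t)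
    (hx : x ∉ ball (b t) R) (hlow : t - R / 2 ≤ dist (b 0) (π x))
    (hup : dist (b 0) (π x) ≤ t + R / 2)
    (hxy : dist (b 0) (π y) = dist (b 0) (π x) + 2 * M * κ t) : R / 4 ≤ dist x y := by
  have hκt := hκ.pos t
  have hR0 : 0 < R := lt_of_lt_of_le (by positivity) hR
  have ht : 0 ≤ t := (hR0.trans hRt).le
  have hnear : dist (π x) (b t) ≤ R / 2 := by
    rw [← hb.apply_dist_zero (hπ x).1, hb _ _ dist_nonneg ht, abs_le]
    exact ⟨by linarith, by linarith⟩
  have hheight : R / 2 ≤ dist x (π x) := by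
    rw [mem_ball, not_lt] at hx
    linarith [dist_triangle x (π x) (b t)]
  have hκx : κ (dist (b 0) (π x)) ≤ 2 * κ t :=
    calc κ (dist (b 0) (π x)) ≤ κ (t + t) := hκ.mono (by linarith)
      _ ≤ 2 * κ t := (hκ.map_add_le ht ht).trans_eq (by ring)
  have hMκx := mul_le_mul_of_nonneg_left hκx hM.le
  by_contra! hlt
  have hshadow := h x y (by linarith) (by linarith)
  linarith [dist_triangle (b 0) (π x) (π y), mul_pos hM hκt]

lemma floor_mul_le_eVariationOn (h : HalfContractingWith κ b π M) (hX : IsCAT0 X)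
    (hκ : IsSublinearFn κ) (hb : IsGeodesicRay b) (hπ : IsProj b π) (hM : 0 < M)
    (hr : 4 * M ≤ r) (ht : r * κ t < t) {γ : ℝ → X} (hγ : γ ∈ pathsOutside κ b r t) :
    ⌊r / (2 * M)⌋₊ * ENNReal.ofReal (r * κ t / 4) ≤ eVariationOn γ (Icc 0 1) := by
  obtain ⟨hcont, hγ0, hγ1, hout⟩ := hγ
  have hκt := hκ.pos t
  have hR : 4 * M * κ t ≤ r * κ t := by gcongr
  have hR0 : 0 < r * κ t := lt_of_lt_of_le (by positivity) hR
  set φ : ℝ → ℝ := fun s => dist (b 0) (π (γ s))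
  have hφ : ContinuousOn φ (Icc 0 1) :=
    (continuous_const.dist (hπ.lipschitzWith_one hX hb).continuous).comp_continuousOn hcont
  have hφ_of_eq : ∀ s u, 0 ≤ u → γ s = b u → φ s = u := fun s u hu hs => by
    simp only [φ, hs, hπ.apply_of_mem (mem_image_of_mem b hu), hb.dist_zero hu]
  have hφ0 := hφ_of_eq 0 (t - r * κ t) (by linarith) hγ0
  have hφ1 := hφ_of_eq 1 (t + r * κ t) (by linarith) hγ1
  obtain ⟨s₀, hs₀, hφs₀⟩ : ∃ s₀ ∈ Icc (0 : ℝ) 1, φ s₀ = t - r * κ t / 2 :=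
    intermediate_value_Icc zero_le_one hφ ⟨by linarith, by linarith⟩
  have hcount : ⌊r / (2 * M)⌋₊ * (2 * M * κ t) ≤ r * κ t :=
    calc ⌊r / (2 * M)⌋₊ * (2 * M * κ t) ≤ r / (2 * M) * (2 * M * κ t) := by
          gcongr
          exact Nat.floor_le (div_nonneg (by linarith) (by positivity))
      _ = r * κ t := by field_simp
  have hsub : Icc s₀ 1 ⊆ Icc 0 1 := Icc_subset_Icc_left hs₀.1
  refine le_trans ?_ (eVariationOn.mono γ hsub)
  refine natCast_mul_le_eVariationOn (φ := φ) (Δ := 2 * M * κ t) _ hs₀.2 (hφ.mono hsub)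
    (by positivity) (by linarith) fun v hv w _ hlow hvw hup => ?_
  rw [edist_dist]
  exact ENNReal.ofReal_le_ofReal (h.div_four_le_dist hκ hb hπ hM hR ht (hout v (hsub hv))
    (by linarith) (by linarith [mul_pos hM hκt]) hvw)

end HalfContractingWith

theorem KappaContracting.exists_quadratic_le_divKappa (h : KappaContracting κ (b 0) b π)
    (hX : IsCAT0 X) (hκ : IsSublinearFn κ) (hb : IsGeodesicRay b) (hπ : IsProj b π) :
    ∃ a > (0 : ℝ), ∃ b₀ c₀ : ℝ, ∀ r : ℝ, 0 < r →
      ENNReal.ofReal (a * r ^ 2 + b₀ * r + c₀) ≤ divKappa κ b r := by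
  obtain ⟨M, hM, hhalf⟩ := h.exists_halfContractingWith hX hκ hb hπ
  refine ⟨1 / (8 * M), by positivity, -1 / 2, 0, fun r hr => ?_⟩
  have hfactor : 1 / (8 * M) * r ^ 2 + -1 / 2 * r + 0 = (r / (2 * M) - 2) * (r / 4) := by
    field_simp
    ring
  rw [hfactor]
  rcases le_total r (4 * M) with hrM | hrM
  · have hle : r / (2 * M) ≤ 2 := (div_le_iff₀ (by positivity)).2 (by linarith)
    rw [ENNReal.ofReal_of_nonpos (mul_nonpos_of_nonpos_of_nonneg (by linarith) (by positivity))]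
    exact zero_le
  refine le_iInf₂ fun t ht => ?_
  have hκt := hκ.pos t
  rw [ENNReal.le_div_iff_mul_le (Or.inl (by simpa using hκt)) (Or.inl ENNReal.ofReal_ne_top)]
  refine le_iInf₂ fun γ hγ => le_trans ?_
    (hhalf.floor_mul_le_eVariationOn hX hκ hb hπ hM hrM ht hγ)
  rw [← ENNReal.ofReal_mul' hκt.le, ← ENNReal.ofReal_natCast, ← ENNReal.ofReal_mul (by positivity),
    mul_assoc, div_mul_eq_mul_div]
  gcongr
  linarith [Nat.lt_floor_add_one (r / (2 * M))]

end ContractingToQuadratic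

lemma tendsto_div_ofReal_nhds_top {f : ℝ → ℝ≥0∞} {a b₀ c₀ : ℝ} (ha : 0 < a)
    (h : ∀ r : ℝ, 0 < r → ENNReal.ofReal (a * r ^ 2 + b₀ * r + c₀) ≤ f r) :
    Tendsto (fun r => f r / ENNReal.ofReal r) atTop (nhds ⊤) := by
  have hlim : Tendsto (fun r : ℝ => ENNReal.ofReal (a * r + (b₀ - |c₀|))) atTop (nhds ⊤) :=
    ENNReal.tendsto_ofReal_atTop.comp
      (tendsto_atTop_add_const_right _ _ (tendsto_id.const_mul_atTop ha))
  refine tendsto_nhds_top_mono hlim ?_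
  filter_upwards [eventually_ge_atTop (1 : ℝ)] with r hr
  have hr0 : 0 < r := zero_lt_one.trans_le hr
  rw [ENNReal.le_div_iff_mul_le (Or.inl (by simpa using hr0)) (Or.inl ENNReal.ofReal_ne_top),
    ← ENNReal.ofReal_mul' hr0.le]
  refine le_trans (ENNReal.ofReal_le_ofReal ?_) (h r hr0)
  linarith [le_mul_of_one_le_right (abs_nonneg c₀) hr, neg_abs_le c₀]

theorem contracting_tfae_general
    {X : Type*} [MetricSpace X] (hX : IsCAT0 X)
    (o : X) (κ : ℝ → ℝ) (hκ : IsSublinearFn κ)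
    (b : ℝ → X) (hb : IsGeodesicRay b) (hb0 : b 0 = o)
    (π : X → X) (hπ : IsProj b π) :
    List.TFAE [
      KappaContracting κ o b π,
      Tendsto (fun r : ℝ => divKappa κ b r / ENNReal.ofReal r) atTop (nhds ⊤),
      ∃ a > (0 : ℝ), ∃ b₀ c₀ : ℝ, ∀ r : ℝ, 0 < r →
        ENNReal.ofReal (a * r ^ 2 + b₀ * r + c₀) ≤ divKappa κ b r,
      SlimCond1 κ o b π] := by
  subst hb0
  tfae_have 1 → 3 := fun h => h.exists_quadratic_le_divKappa hX hκ hb hπ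
  tfae_have 3 → 2 := fun ⟨_, ha, _, _, h⟩ => tendsto_div_ofReal_nhds_top ha h
  tfae_have 2 → 4 := SlimCond1.of_tendsto_divKappa hX hκ hb hπ
  tfae_have 4 → 1 := SlimCond1.kappaContracting hX hκ hb hπ
  tfae_finish

/-- Theorem A. For a geodesic ray `b` in a proper CAT(0) space, the
following are equivalent: (1) `b` is `κ`-contracting; (2) the κ-lower divergence of `b`
is superlinear; (3) the κ-lower divergence of `b` is at least quadratic; (4) `b` is
`κ`-slim. -/
theorem contracting_tfae
    {X : Type*} [MetricSpace X] [ProperSpace X] (hX : IsCAT0 X)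
    (o : X) (κ : ℝ → ℝ) (hκ : IsSublinearFn κ)
    (b : ℝ → X) (hb : IsGeodesicRay b) (hb0 : b 0 = o)
    (π : X → X) (hπ : IsProj b π) :
    (KappaContracting κ o b π ↔
      Tendsto (fun r : ℝ => divKappa κ b r / ENNReal.ofReal r) atTop (nhds ⊤)) ∧
    (KappaContracting κ o b π ↔
      ∃ a > (0:ℝ), ∃ b₀ c₀ : ℝ, ∀ r : ℝ, 0 < r →
        ENNReal.ofReal (a * r ^ 2 + b₀ * r + c₀) ≤ divKappa κ b r) ∧
    (KappaContracting κ o b π ↔ SlimCond1 κ o b π) := by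
  have h := contracting_tfae_general hX o κ hκ b hb hb0 π hπ
  exact ⟨h.out 0 1, h.out 0 2, h.out 0 3⟩
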